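/- Let G be a chordal graph on vertices {1,…,p} with edge set E and maximal cliques C_1,…,C_t, and let α = {α_1,…,α_p} be a partition of n. Then a block-sparse symmetric matrix Z ∈ S^n_α(E,0) is positive semidefinite (i.e., Z ∈ S^n_{α,+}(E,0)) if and only if there exist positive semidefinite matrices Z_k ∈ S^{s(α,k)}_+, k = 1,…,t, such that Z = Σ_{k=1}^t E_{C_k,α}^T Z_k E_{C_k,α}. -/

import Mathlib

/-!
A sum of inflated positive semidefinite blocks is positive semidefinite. The converse is proved by
symmetric Gaussian elimination along a perfect elimination ordering.

By Dirac's theorem (`exists_simplicial_nonadj`), every nonempty set of vertices of a chordal graph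
contains a vertex that is simplicial in the induced subgraph. Take a scalar index `x` lying in such
a simplicial block. If `Z x x = 0`, row and column `x` of `Z` vanish and `x` can be dropped.
Otherwise, with `z` the column `x` of `Z`, the Schur complement `Z - (Z x x)⁻¹ z zᵀ` is again
positive semidefinite and has zero row and column `x`; since `z` is supported on the closed
neighbourhood of a simplicial block, which is a clique, no new nonzero block appears off `E`.
Working with scalar indices inside the blocks avoids generalized inverses of singular diagonal
blocks. Iterating writes `Z` as a sum of nonnegative multiples of `v vᵀ` with `v` supported on a
clique (`elimination_induction`), and each such term is assigned to a maximal clique containing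
the support of `v`.

Dirac's theorem is proved in the form: every vertex `v` with a non-neighbour in `S` has a simplicial
non-neighbour in `S`. Let `A` be a connected component of the non-neighbours of `v`. The vertices
outside `A` adjacent to `A` are all adjacent to `v` and form a clique: for two of them,
nonadjacent, a shortest path through `A` closed up by `v` would be a chordless cycle
(`adj_of_walk`). Induction on the closed neighbourhood of `A`, which misses `v`, gives the vertex.
-/


open Finset Matrix

/-- The edge relation is symmetric. -/
def EdgeSymm {V : Type*} (E : V → V → Prop) : Prop := ∀ i j, E i j → E j i

/-- Every vertex has a self-loop. -/
def HasSelfLoops {V : Type*} (E : V → V → Prop) : Prop := ∀ i, E i i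

/-- A clique: a finite set of pairwise adjacent vertices. -/
def IsGraphClique {V : Type*} (E : V → V → Prop) (C : Finset V) : Prop :=
  ∀ i ∈ C, ∀ j ∈ C, E i j

/-- A maximal clique: a clique not properly contained in any other clique. -/
def IsMaximalGraphClique {V : Type*} (E : V → V → Prop) (C : Finset V) : Prop :=
  IsGraphClique E C ∧ ∀ D : Finset V, IsGraphClique E D → C ⊆ D → D = C

/-- Chordality: every cycle of length at least 4 has a chord. -/
def IsChordalRel {V : Type*} (E : V → V → Prop) : Prop :=
  ∀ (k : ℕ) (c : Fin (k + 4) → V), Function.Injective c →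
    (∀ i, E (c i) (c (i + 1))) →
    ∃ i j : Fin (k + 4), i ≠ j ∧ j ≠ i + 1 ∧ i ≠ j + 1 ∧ E (c i) (c j)

/-- The index set `{1,…,n}` split into `p` blocks of sizes `α 1, …, α p`. -/
abbrev BlockIdx {p : ℕ} (α : Fin p → ℕ) := (i : Fin p) × Fin (α i)

/-- `Z ∈ S^n_α(E,0)`: symmetric, with the `(i,j)` block vanishing whenever `(i,j) ∉ E`. -/
def BlockSparsity {p : ℕ} (α : Fin p → ℕ) (E : Fin p → Fin p → Prop)
    (Z : Matrix (BlockIdx α) (BlockIdx α) ℝ) : Prop :=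
  Z.IsSymm ∧ ∀ i j : Fin p, ¬ E i j → ∀ (a : Fin (α i)) (b : Fin (α j)), Z ⟨i, a⟩ ⟨j, b⟩ = 0

/-- The block 0/1 matrix `E_{C,α}` selecting the rows whose block index lies in `C`. -/
def blockCliqueMat {p : ℕ} (α : Fin p → ℕ) (C : Finset (Fin p)) :
    Matrix {x : BlockIdx α // x.1 ∈ C} (BlockIdx α) ℝ :=
  Matrix.of fun a b => if a.1 = b then 1 else 0

/-! ### Simplicial vertices of chordal graphs -/

/-- If `x` and `y` are neighbours of `v` joined by a walk with no interior vertex adjacent to `v`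
(in particular none equal to `v`, by the self-loops), then `x` and `y` are adjacent: otherwise a shortest such walk together with `v` is a chordless
cycle of length at least 4. -/
lemma adj_of_walk {V : Type*} {E : V → V → Prop} (hsymm : EdgeSymm E) (hloop : HasSelfLoops E)
    (hch : IsChordalRel E) {v x y : V} (hvx : E v x) (hvy : E v y)
    (h : ∃ n, ∃ c : ℕ → V, c 0 = x ∧ c n = y ∧ (∀ i < n, E (c i) (c (i + 1))) ∧
      ∀ i, 0 < i → i < n → ¬ E v (c i)) : E x y := by
  classical
  by_contra hxy
  obtain ⟨n, ⟨c, h0, hn, hE, hv⟩, hmin⟩ := (⟨Nat.find h, Nat.find_spec h,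
    fun m hm => Nat.find_min h hm⟩ : ∃ n, (∃ c : ℕ → V, c 0 = x ∧ c n = y ∧
      (∀ i < n, E (c i) (c (i + 1))) ∧ ∀ i, 0 < i → i < n → ¬ E v (c i)) ∧
      ∀ m < n, ¬ ∃ c : ℕ → V, c 0 = x ∧ c m = y ∧ (∀ i < m, E (c i) (c (i + 1))) ∧
      ∀ i, 0 < i → i < m → ¬ E v (c i))
  -- An edge between vertices at distance at least 2 along the walk would shorten it.
  have hshort : ∀ i j, i + 2 ≤ j → j ≤ n → ¬ E (c i) (c j) := by
    intro i j hij hj hE'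
    obtain ⟨d, rfl⟩ := Nat.exists_eq_add_of_le hij
    refine hmin (n - (d + 1)) (by omega) ⟨fun m => if m ≤ i then c m else c (m + (d + 1)),
      by simpa using h0, ?_, ?_, ?_⟩
    · dsimp only
      rw [if_neg (by omega), Nat.sub_add_cancel (by omega), hn]
    · intro m hm
      dsimp only
      rcases lt_trichotomy m i with hlt | rfl | hgt
      · rw [if_pos hlt.le, if_pos (by omega)]
        exact hE m (by omega)
      · rw [if_pos le_rfl, if_neg (by omega)]
        convert hE' using 2
        omega
      · rw [if_neg (by omega), if_neg (by omega)]
        convert hE (m + (d + 1)) (by omega) using 2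
        omega
    · intro m hm0 hm
      dsimp only
      split_ifs
      · exact hv m hm0 (by omega)
      · exact hv _ (by omega) (by omega)
  have hn2 : 2 ≤ n := by
    by_contra hlt
    have : n = 0 ∨ n = 1 := by omega
    rcases this with rfl | rfl
    · exact hxy (by rw [← h0, ← hn]; exact hloop _)
    · exact hxy (by rw [← h0, ← hn]; exact hE 0 (by omega))
  have hne : ∀ i j, i < j → j ≤ n → c i ≠ c j := by
    intro i j hij hj heq
    by_cases h2 : i + 2 ≤ j
    · exact hshort i j h2 hj (heq ▸ hloop _)
    obtain rfl : j = i + 1 := by omega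
    by_cases h3 : i + 2 ≤ n
    · exact hshort i (i + 2) le_rfl h3 (heq ▸ hE (i + 1) (by omega))
    · have h4 := hE (i - 1) (by omega)
      rw [Nat.sub_add_cancel (by omega), heq] at h4
      exact hshort (i - 1) (i + 1) (by omega) hj h4
  have hvne : ∀ i, i ≤ n → c i ≠ v := by
    rintro i hi heq
    rcases Nat.eq_zero_or_pos i with rfl | hpos
    · exact hxy (by rw [← h0, heq]; exact hvy)
    rcases hi.lt_or_eq with hlt | rfl
    · exact hv i hpos hlt (heq ▸ hloop _)
    · exact hxy (by rw [← hn, heq]; exact hsymm _ _ hvx)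
  obtain ⟨k, rfl⟩ := Nat.exists_eq_add_of_le' hn2
  -- the chordless cycle: the shortest walk closed up by `v`, which has index `k + 3`
  set d : Fin (k + 4) → V := fun i => if i.val ≤ k + 2 then c i else v with hd
  have hval : ∀ i : Fin (k + 4), (i + 1).val = if i.val = k + 3 then 0 else i.val + 1 := by
    intro i
    rw [Fin.val_add_one]
    simp [Fin.ext_iff]
  have hinj' : ∀ i j : Fin (k + 4), i < j → d i ≠ d j := by
    intro i j hij
    have : i.val < j.val := hij
    simp only [hd]
    rw [if_pos (by omega)]
    split_ifs with h5
    · exact hne _ _ this h5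
    · exact hvne _ (by omega)
  have hinj : Function.Injective d := by
    intro i j hij
    rcases lt_trichotomy i j with hlt | rfl | hgt
    · exact absurd hij (hinj' _ _ hlt)
    · rfl
    · exact absurd hij.symm (hinj' _ _ hgt)
  have hcyc : ∀ i, E (d i) (d (i + 1)) := by
    intro i
    have hi := hval i
    have := i.isLt
    simp only [hd]
    rw [hi]
    by_cases h6 : i.val = k + 3
    · rw [if_pos h6, if_neg (by omega), if_pos (by omega), h0]
      exact hvx
    · rw [if_neg h6, if_pos (by omega)]
      split_ifs with h7
      · exact hE _ (by omega)
      · have : i.val = k + 2 := by omega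
        rw [this, hn]
        exact hsymm _ _ hvy
  have hchord : ∀ i j : Fin (k + 4), i < j → j ≠ i + 1 → i ≠ j + 1 → ¬ E (d i) (d j) := by
    intro i j hij h1 h2 hE'
    have hlt : i.val < j.val := hij
    have hi := hval i
    have hj := hval j
    have := j.isLt
    rw [Ne, Fin.ext_iff] at h1 h2
    rw [if_neg (by omega)] at hi
    simp only [hd] at hE'
    rw [if_pos (by omega)] at hE'
    split_ifs at hE' with h8
    · exact hshort _ _ (by omega) h8 hE'
    · rw [if_pos (by omega)] at hj
      exact hv i (by omega) (by omega) (hsymm _ _ hE')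
  obtain ⟨i, j, h1, h2, h3, h4⟩ := hch k d hinj hcyc
  rcases lt_or_gt_of_ne h1 with hlt | hgt
  · exact hchord i j hlt h2 h3 h4
  · exact hchord j i hgt h3 h2 (hsymm _ _ h4)

lemma exists_walk_of_reflTransGen {V : Type*} {E : V → V → Prop} {H : V → Prop} {a b : V}
    (h : Relation.ReflTransGen (fun u w => E u w ∧ H u ∧ H w) a b) (ha : H a) :
    ∃ n, ∃ c : ℕ → V, c 0 = a ∧ c n = b ∧ (∀ i < n, E (c i) (c (i + 1))) ∧
      ∀ i ≤ n, H (c i) := by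
  induction h with
  | refl => exact ⟨0, fun _ => a, rfl, rfl, by simp, by simpa using ha⟩
  | @tail b w _ hbc ih =>
    obtain ⟨n, c, h0, hn, hE, hH⟩ := ih
    refine ⟨n + 1, fun m => if m ≤ n then c m else w, by simpa using h0, by simp, ?_, ?_⟩
    · intro i hi
      dsimp only
      rw [if_pos (by omega)]
      split_ifs with h1
      · exact hE i (by omega)
      · obtain rfl : i = n := by omega
        rw [hn]
        exact hbc.1
    · intro i hi
      dsimp only
      split_ifs with h1
      · exact hH i h1
      · exact hbc.2.2

/-- Dirac's theorem, in a form suited to induction: in the subgraph of a chordal graph induced by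
`S`, a vertex `v` with a non-neighbour has a non-neighbour that is simplicial. -/
lemma exists_simplicial_nonadj {V : Type*} {E : V → V → Prop} (hsymm : EdgeSymm E)
    (hloop : HasSelfLoops E) (hch : IsChordalRel E) (S : Finset V) :
    ∀ v ∈ S, (∃ u ∈ S, ¬ E v u) →
      ∃ w ∈ S, ¬ E v w ∧ ∀ x ∈ S, ∀ y ∈ S, E w x → E w y → E x y := by
  classical
  induction S using Finset.strongInduction with
  | H S ih =>
    rintro v hvS ⟨a, haS, hva⟩
    -- `A` is the connected component of `a` among the non-neighbours of `v` in `S`.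
    let H : V → Prop := fun u => u ∈ S ∧ ¬ E v u
    let A : V → Prop := Relation.ReflTransGen (fun u w => E u w ∧ H u ∧ H w) a
    have hHa : H a := ⟨haS, hva⟩
    have hAH : ∀ u, A u → H u := by
      intro u hu
      cases hu with
      | refl => exact hHa
      | tail _ h => exact h.2.2
    have hAsymm : ∀ u w, A u → A w →
        Relation.ReflTransGen (fun u w => E u w ∧ H u ∧ H w) u w := by
      intro u w hu hw
      have hs : Std.Symm (fun u w => E u w ∧ H u ∧ H w) :=
        ⟨fun p q h => ⟨hsymm _ _ h.1, h.2.2, h.2.1⟩⟩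
      exact (Relation.ReflTransGen.stdSymm.symm _ _ hu).trans hw
    -- `S'` is the closed neighbourhood of `A` in `S`.
    let S' : Finset V := S.filter fun x => ∃ u, A u ∧ E u x
    have hmem : ∀ x, x ∈ S' ↔ x ∈ S ∧ ∃ u, A u ∧ E u x := fun x => by simp [S']
    have haS' : a ∈ S' := (hmem a).2 ⟨haS, a, Relation.ReflTransGen.refl, hloop a⟩
    have hss : S' ⊂ S := by
      refine (Finset.ssubset_iff_of_subset (Finset.filter_subset _ _)).2 ⟨v, hvS, fun hv => ?_⟩
      obtain ⟨_, u, hu, huv⟩ := (hmem v).1 hv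
      exact (hAH u hu).2 (hsymm _ _ huv)
    have hbd : ∀ x ∈ S', ¬ A x → E v x := by
      intro x hx hAx
      by_contra hvx
      obtain ⟨hxS, u, hu, hux⟩ := (hmem x).1 hx
      exact hAx (Relation.ReflTransGen.tail hu ⟨hux, hAH u hu, hxS, hvx⟩)
    have hkey : ∀ x ∈ S', ∀ y ∈ S', ¬ A x → ¬ A y → E x y := by
      intro x hx y hy hAx hAy
      refine adj_of_walk hsymm hloop hch (hbd x hx hAx) (hbd y hy hAy) ?_
      obtain ⟨hxS, u, hu, hux⟩ := (hmem x).1 hx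
      obtain ⟨hyS, w, hw, hwy⟩ := (hmem y).1 hy
      obtain ⟨n, c, h0, hn, hE, hH⟩ := exists_walk_of_reflTransGen (hAsymm u w hu hw) (hAH u hu)
      refine ⟨n + 2, fun m => if m = 0 then x else if m ≤ n + 1 then c (m - 1) else y,
        by simp, by simp, ?_, ?_⟩
      · intro i hi
        rcases Nat.eq_zero_or_pos i with rfl | hpos
        · simpa [h0] using hsymm _ _ hux
        · dsimp only
          rw [if_neg (by omega), if_pos (by omega), if_neg (by omega)]
          split_ifs with h1
          · convert hE (i - 1) (by omega) using 2
            omega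
          · obtain rfl : i = n + 1 := by omega
            simpa [hn] using hwy
      · intro i h1 h2
        dsimp only
        rw [if_neg (by omega), if_pos (by omega)]
        exact (hH _ (by omega)).2
    -- A simplicial vertex of `S'` not adjacent to some vertex outside `A` lies in `A`, because the
    -- vertices of `S'` outside `A` form a clique.
    obtain ⟨w, hwS', hAw, hw⟩ : ∃ w ∈ S', A w ∧
        ∀ x ∈ S', ∀ y ∈ S', E w x → E w y → E x y := by
      by_cases hcl : ∀ p ∈ S', ∀ q ∈ S', E p q
      · exact ⟨a, haS', Relation.ReflTransGen.refl, fun x hx y hy _ _ => hcl x hx y hy⟩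
      by_cases hx : ∃ x ∈ S', ¬ A x ∧ ∃ u ∈ S', ¬ E x u
      · obtain ⟨x, hxS', hAx, hu⟩ := hx
        obtain ⟨w, hwS', hxw, hw⟩ := ih S' hss x hxS' hu
        exact ⟨w, hwS', by_contra fun hAw => hxw (hkey x hxS' w hwS' hAx hAw), hw⟩
      · push Not at hcl hx
        obtain ⟨p, hp, q, hq, hpq⟩ := hcl
        obtain ⟨w, hwS', hpw, hw⟩ := ih S' hss p hp ⟨q, hq, hpq⟩
        exact ⟨w, hwS', by_contra fun hAw => hpw (hsymm _ _ (hx w hwS' hAw p hp)), hw⟩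
    have hup : ∀ x ∈ S, E w x → x ∈ S' := fun x hx hwx => (hmem x).2 ⟨hx, w, hAw, hwx⟩
    exact ⟨w, (hAH w hAw).1, (hAH w hAw).2,
      fun x hx y hy hwx hwy => hw x (hup x hx hwx) y (hup y hy hwy) hwx hwy⟩

lemma exists_simplicial {V : Type*} {E : V → V → Prop} (hsymm : EdgeSymm E)
    (hloop : HasSelfLoops E) (hch : IsChordalRel E) (S : Finset V) (hS : S.Nonempty) :
    ∃ w ∈ S, ∀ x ∈ S, ∀ y ∈ S, E w x → E w y → E x y := by
  by_cases hcl : ∀ p ∈ S, ∀ q ∈ S, E p q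
  · obtain ⟨a, ha⟩ := hS
    exact ⟨a, ha, fun x hx y hy _ _ => hcl x hx y hy⟩
  · push Not at hcl
    obtain ⟨p, hp, hq⟩ := hcl
    obtain ⟨w, hw, _, h⟩ := exists_simplicial_nonadj hsymm hloop hch S p hp hq
    exact ⟨w, hw, h⟩

/-! ### Symmetric elimination -/

lemma Matrix.PosSemidef.apply_eq_zero_of_diag {ι : Type*} {Z : Matrix ι ι ℝ}
    (hZ : Z.PosSemidef) {x : ι} (hx : Z x x = 0) (y : ι) : Z x y = 0 := by
  have h := (hZ.submatrix ![x, y]).det_nonneg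
  have hs : Z y x = Z x y := by simpa using hZ.1.apply x y
  rw [Matrix.det_fin_two] at h
  simp only [Matrix.submatrix_apply, Matrix.cons_val_zero, Matrix.cons_val_one, hx, hs] at h
  nlinarith [sq_nonneg (Z x y)]

/-- The Schur complement of a nonzero diagonal entry, inflated by a zero row and column, is
positive semidefinite. -/
lemma Matrix.PosSemidef.sub_pivot {ι : Type*} [Fintype ι] {Z : Matrix ι ι ℝ}
    (hZ : Z.PosSemidef) {x : ι} (hx : Z x x ≠ 0) :
    (Z - (Z x x)⁻¹ • vecMulVec (Z x) (Z x)).PosSemidef := by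
  classical
  have hs : ∀ i j, Z i j = Z j i := fun i j => by simpa using hZ.1.apply j i
  -- The elimination matrix `P = 1 - (Z x x)⁻¹ eₓ zᵀ` satisfies `Pᵀ Z P = Z - (Z x x)⁻¹ z zᵀ`.
  set P : Matrix ι ι ℝ := 1 - (Z x x)⁻¹ • vecMulVec (Pi.single x 1) (Z x) with hP
  have h1 : Z * P = Z - (Z x x)⁻¹ • vecMulVec (Z x) (Z x) := by
    have : Z *ᵥ Pi.single x 1 = Z x := by
      ext i
      simp [hs i x]
    rw [hP, mul_sub, mul_one, Matrix.mul_smul, Matrix.mul_vecMulVec, this]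
  have h2 : Pᴴ * (Z * P) = Z - (Z x x)⁻¹ • vecMulVec (Z x) (Z x) := by
    have h3 : Pi.single x 1 ᵥ* (Z - (Z x x)⁻¹ • vecMulVec (Z x) (Z x)) = 0 := by
      ext j
      simp [vecMulVec_apply, hx]
    have h4 : Pᴴ = 1 - (Z x x)⁻¹ • vecMulVec (Z x) (Pi.single x 1) := by
      ext i j
      simp [hP, vecMulVec_apply, Matrix.one_apply, eq_comm, mul_comm]
    rw [h1, h4, sub_mul, one_mul, Matrix.smul_mul, Matrix.vecMulVec_mul, h3]
    simp
  rw [← h2, ← mul_assoc]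
  exact hZ.conjTranspose_mul_mul_same P

/-- Induction principle from elimination: a property closed under addition that holds for `0` and
for all `c v vᵀ` with `0 ≤ c` and `v` supported on a clique holds for every positive semidefinite
matrix with chordal sparsity pattern. Here `f` sends a scalar index to its vertex (its block), and
`T` contains the indices of the rows that are not yet eliminated. -/
lemma elimination_induction {ι V : Type*} [Fintype ι] {E : V → V → Prop} (f : ι → V)
    (hsymm : EdgeSymm E) (hloop : HasSelfLoops E) (hch : IsChordalRel E)
    {Q : Matrix ι ι ℝ → Prop} (h0 : Q 0) (hadd : ∀ A B, Q A → Q B → Q (A + B))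
    (hrank : ∀ (v : ι → ℝ) (c : ℝ), 0 ≤ c → (∀ i j, v i ≠ 0 → v j ≠ 0 → E (f i) (f j)) →
      Q (c • vecMulVec v v)) (T : Finset ι) :
    ∀ Z : Matrix ι ι ℝ, Z.PosSemidef →
      (∀ i j, Z i j ≠ 0 → i ∈ T ∧ j ∈ T ∧ E (f i) (f j)) → Q Z := by
  classical
  induction T using Finset.strongInduction with
  | H T ih =>
    intro Z hZ hsupp
    rcases T.eq_empty_or_nonempty with rfl | hT
    · convert h0
      ext i j
      by_contra hne
      simpa using (hsupp i j hne).1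
    obtain ⟨w, hwT, hw⟩ := exists_simplicial hsymm hloop hch (T.image f) (hT.image f)
    obtain ⟨x, hxT, rfl⟩ := Finset.mem_image.1 hwT
    have hs : ∀ i j, Z i j = Z j i := fun i j => by simpa using hZ.1.apply j i
    have hlt : T.erase x ⊂ T := Finset.erase_ssubset hxT
    by_cases hx : Z x x = 0
    · refine ih _ hlt Z hZ fun i j hij => ?_
      obtain ⟨hi, hj, hE⟩ := hsupp i j hij
      refine ⟨Finset.mem_erase.2 ⟨?_, hi⟩, Finset.mem_erase.2 ⟨?_, hj⟩, hE⟩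
      · rintro rfl
        exact hij (hZ.apply_eq_zero_of_diag hx j)
      · rintro rfl
        exact hij (by rw [hs]; exact hZ.apply_eq_zero_of_diag hx i)
    · have hclique : ∀ i j, Z x i ≠ 0 → Z x j ≠ 0 → i ∈ T ∧ j ∈ T ∧ E (f i) (f j) := by
        intro i j hi hj
        obtain ⟨_, hiT, hEi⟩ := hsupp x i hi
        obtain ⟨_, hjT, hEj⟩ := hsupp x j hj
        exact ⟨hiT, hjT, hw _ (Finset.mem_image_of_mem f hiT) _
          (Finset.mem_image_of_mem f hjT) hEi hEj⟩
      have hQ := hadd _ _ (ih _ hlt _ (hZ.sub_pivot hx) ?_)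
        (hrank (Z x) (Z x x)⁻¹ (inv_nonneg.2 hZ.diag_nonneg)
          fun i j hi hj => (hclique i j hi hj).2.2)
      · simpa using hQ
      intro i j hij
      simp only [Matrix.sub_apply, Matrix.smul_apply, vecMulVec_apply, smul_eq_mul] at hij
      have hE : i ∈ T ∧ j ∈ T ∧ E (f i) (f j) := by
        by_cases hZij : Z i j = 0
        · refine hclique i j ?_ ?_ <;> intro hz <;> simp [hZij, hz] at hij
        · exact hsupp i j hZij
      refine ⟨Finset.mem_erase.2 ⟨?_, hE.1⟩, Finset.mem_erase.2 ⟨?_, hE.2.1⟩, hE.2.2⟩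
      · rintro rfl
        exact hij (by field_simp; ring)
      · rintro rfl
        exact hij (by rw [hs i j]; field_simp; ring)

/-! ### Assigning rank-one terms to maximal cliques -/

lemma exists_maximalClique_superset {V : Type*} [Finite V] {E : V → V → Prop} {D : Finset V}
    (hD : IsGraphClique E D) : ∃ M, IsMaximalGraphClique E M ∧ D ⊆ M := by
  obtain ⟨M, hDM, hM⟩ := Finite.exists_le_maximal (p := IsGraphClique E) hD
  exact ⟨M, ⟨hM.1, fun D' hD' hMD' => (hM.eq_of_le hD' hMD').symm⟩, hDM⟩

/-- Restricting a vector supported on the blocks in `C` and inflating it again changes nothing. -/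
lemma restrict_vecMul_blockCliqueMat {p : ℕ} (α : Fin p → ℕ) (C : Finset (Fin p))
    (v : BlockIdx α → ℝ) (hv : ∀ x, v x ≠ 0 → x.1 ∈ C) :
    (fun a : {x : BlockIdx α // x.1 ∈ C} => v a.1) ᵥ* blockCliqueMat α C = v := by
  ext x
  simp only [Matrix.vecMul, dotProduct, blockCliqueMat, Matrix.of_apply, mul_ite, mul_one,
    mul_zero]
  by_cases hx : x.1 ∈ C
  · rw [Finset.sum_eq_single ⟨x, hx⟩]
    · simp
    · intro b _ hb
      rw [if_neg fun h => hb (Subtype.ext h)]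
    · simp
  · rw [Finset.sum_eq_zero]
    · by_contra hne
      exact hx (hv x (Ne.symm hne))
    · intro b _
      rw [if_neg]
      rintro h
      exact hx (h ▸ b.2)

/-- **Chordal block-decomposition.** Let `G` be a chordal graph on `{1,…,p}` with maximal
cliques `C 1, …, C t` and let `α` be a partition of `n`. Then `Z ∈ S^n_α(E,0)` is positive
semidefinite iff `Z = ∑ k, E_{C_k,α}ᵀ Z_k E_{C_k,α}` for some `Z_k ∈ S^{s(α,k)}_+`. -/
theorem chordal_block_decomposition {n p t : ℕ} (α : Fin p → ℕ)
    (hpos : ∀ i, 0 < α i) (hsum : ∑ i, α i = n)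
    (E : Fin p → Fin p → Prop)
    (hsymm : EdgeSymm E) (hloop : HasSelfLoops E) (hchordal : IsChordalRel E)
    (C : Fin t → Finset (Fin p)) (hinj : Function.Injective C)
    (hmax : ∀ k, IsMaximalGraphClique E (C k))
    (hall : ∀ D : Finset (Fin p), IsMaximalGraphClique E D → ∃ k, C k = D)
    (Z : Matrix (BlockIdx α) (BlockIdx α) ℝ) (hZ : BlockSparsity α E Z) :
    Z.PosSemidef ↔
      ∃ Zk : (k : Fin t) →
          Matrix {x : BlockIdx α // x.1 ∈ C k} {x : BlockIdx α // x.1 ∈ C k} ℝ,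
        (∀ k, (Zk k).PosSemidef) ∧
        Z = ∑ k, (blockCliqueMat α (C k))ᵀ * Zk k * blockCliqueMat α (C k) := by
  constructor
  · intro hpsd
    refine elimination_induction (E := E) (fun x : BlockIdx α => x.1) hsymm hloop hchordal
      (Q := fun Z => ∃ Zk : (k : Fin t) →
          Matrix {x : BlockIdx α // x.1 ∈ C k} {x : BlockIdx α // x.1 ∈ C k} ℝ,
        (∀ k, (Zk k).PosSemidef) ∧
        Z = ∑ k, (blockCliqueMat α (C k))ᵀ * Zk k * blockCliqueMat α (C k))
      ?_ ?_ ?_ Finset.univ Z hpsd ?_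
    · exact ⟨fun _ => 0, fun _ => Matrix.PosSemidef.zero, by simp⟩
    · rintro A B ⟨X, hX, rfl⟩ ⟨Y, hY, rfl⟩
      refine ⟨fun k => X k + Y k, fun k => (hX k).add (hY k), ?_⟩
      simp only [Matrix.mul_add, Matrix.add_mul, Finset.sum_add_distrib]
    · intro v c hc hv
      classical
      obtain ⟨M, hM, hsub⟩ := exists_maximalClique_superset (E := E)
        (D := (Finset.univ.filter fun x => v x ≠ 0).image fun x : BlockIdx α => x.1) (by
          intro i hi j hj
          simp only [Finset.mem_image, Finset.mem_filter, Finset.mem_univ, true_and] at hi hj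
          obtain ⟨x, hx, rfl⟩ := hi
          obtain ⟨y, hy, rfl⟩ := hj
          exact hv x y hx hy)
      obtain ⟨k, rfl⟩ := hall M hM
      have hvk : ∀ x, v x ≠ 0 → x.1 ∈ C k := fun x hx =>
        hsub (Finset.mem_image_of_mem _ (by simpa using hx))
      refine ⟨fun l => if l = k then c • vecMulVec (fun a => v a.1) (fun a => v a.1) else 0,
        fun l => ?_, ?_⟩
      · dsimp only
        split_ifs
        · have h := Matrix.posSemidef_vecMulVec_self_star
            (fun a : {x : BlockIdx α // x.1 ∈ C l} => v a.1)
          rw [star_trivial] at h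
          exact h.smul hc
        · exact Matrix.PosSemidef.zero
      · rw [Finset.sum_eq_single k]
        · dsimp only
          rw [if_pos rfl, Matrix.mul_smul, Matrix.smul_mul, Matrix.mul_vecMulVec,
            Matrix.vecMulVec_mul, Matrix.mulVec_transpose,
            restrict_vecMul_blockCliqueMat α (C k) v hvk]
        · intro l _ hl
          simp [hl]
        · simp
    · intro x y hxy
      exact ⟨Finset.mem_univ _, Finset.mem_univ _,
        by_contra fun hE => hxy (hZ.2 x.1 y.1 hE x.2 y.2)⟩
  · rintro ⟨Zk, hk, rfl⟩
    refine Matrix.posSemidef_sum _ fun k _ => ?_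
    rw [← Matrix.conjTranspose_eq_transpose_of_trivial]
    exact (hk k).conjTranspose_mul_mul_same _
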